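/- Let n, m, t be natural numbers with m + t ≤ n, let S ⊆ Fin n with |S| = t, and let 𝓖 be a nonempty finite 2^{−m}-almost-universal₂ family of functions from (Fin n → ZMod 2) to (Fin m → ZMod 2) (as realized, e.g., by Toeplitz hashing). On the probability space Ω = (Fin n → ZMod 2) × 𝓖 with the uniform measure, define K_au(x, g) = g(x), E(x, g) = the restriction of x to S, and G(x, g) = g. Then, writing s = n − t − m, the mutual information (in nats) satisfies I[K_au : (E, G)] ≤ 2^{−s}. -/

import Mathlib

/-- A finite family `𝓖` of functions from `R` to `T` is `ε`-almost-universal₂. -/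
def AlmostUniversal₂ {R T : Type*} [DecidableEq T] (ε : ℝ) (𝓖 : Finset (R → T)) : Prop :=
  ∀ r r' : R, r ≠ r' →
    (((𝓖.filter fun g => g r = g r').card : ℝ) / (𝓖.card : ℝ)) ≤ ε

/-- Mutual information (in nats) between the finitely-valued random variables `X` and `Y`
on a finite probability space with probability mass function `P`. -/
noncomputable def mutualInfo {Ω A B : Type*} [Fintype Ω] [Fintype A] [Fintype B]
    [DecidableEq A] [DecidableEq B] (P : Ω → ℝ) (X : Ω → A) (Y : Ω → B) : ℝ :=
  ∑ a : A, ∑ b : B,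
    (∑ ω ∈ Finset.univ.filter (fun ω => X ω = a ∧ Y ω = b), P ω) *
      Real.log
        ((∑ ω ∈ Finset.univ.filter (fun ω => X ω = a ∧ Y ω = b), P ω) /
          ((∑ ω ∈ Finset.univ.filter (fun ω => X ω = a), P ω) *
            (∑ ω ∈ Finset.univ.filter (fun ω => Y ω = b), P ω)))

/-!
By Jensen, the Shannon entropy of `X` given `Y` is at least minus the logarithm of the conditional
collision probability of `X` given `Y`. If `X` takes values in `A`, its entropy is at most
`log |A|`; so `I[X : Y]` is at most the logarithm of `|A|` times the conditional collision
probability of `X` given `Y`. Two independent copies of `x` with the same side information `E x`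
have the same image under a random hash either because they coincide, or by a hash collision of
probability at most `ε`; so hashing raises the conditional collision probability by at most `ε`.
For uniform `x ∈ R` and `E x ∈ B` the collision probability of `x` given `E x` is at most
`|B| / |R|`, and `ε = 1 / |T|` leaves `log (1 + |T| |B| / |R|)`.
-/

lemma zpow_neg_sub_sub_eq_div {K : Type*} [GroupWithZero K] {a : K} (ha : a ≠ 0) {n m t : ℕ}
    (hmt : m + t ≤ n) : a ^ (-((n - t - m : ℕ) : ℤ)) = a ^ m * a ^ t / a ^ n := by
  have exponent_eq : -((n - t - m : ℕ) : ℤ) = (m + t : ℕ) - n := by omega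
  rw [exponent_eq, zpow_sub₀ ha, zpow_natCast, zpow_natCast, pow_add]

section LogJensen

variable {ι : Type*} [Fintype ι] {w y : ι → ℝ}

lemma sum_mul_pos_of_sum_eq_one (hw : ∀ i, 0 ≤ w i) (hw₁ : ∑ i, w i = 1)
    (hy : ∀ i, w i ≠ 0 → 0 < y i) : 0 < ∑ i, w i * y i := by
  obtain ⟨j, -, hj⟩ := Finset.exists_ne_zero_of_sum_ne_zero (hw₁.trans_ne one_ne_zero)
  refine Finset.sum_pos' (fun i _ => ?_)
    ⟨j, Finset.mem_univ j, mul_pos ((hw j).lt_of_ne' hj) (hy j hj)⟩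
  rcases eq_or_ne (w i) 0 with hi | hi
  · rw [hi, zero_mul]
  · exact mul_nonneg (hw i) (hy i hi).le

lemma sum_mul_log_le_log_sum_mul (hw : ∀ i, 0 ≤ w i) (hw₁ : ∑ i, w i = 1)
    (hy : ∀ i, w i ≠ 0 → 0 < y i) :
    ∑ i, w i * Real.log (y i) ≤ Real.log (∑ i, w i * y i) := by
  have sum_support (f : ι → ℝ) : ∑ i with w i ≠ 0, w i * f i = ∑ i, w i * f i :=
    Finset.sum_filter_of_ne fun _ _ => left_ne_zero_of_mul
  have jensen := strictConcaveOn_log_Ioi.concaveOn.le_map_sum (t := {i | w i ≠ 0}) (w := w) (p := y)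
    (fun i _ => hw i) ((Finset.sum_filter_ne_zero _).trans hw₁)
    (fun i hi => hy i (Finset.mem_filter.1 hi).2)
  simpa only [smul_eq_mul, sum_support] using jensen

end LogJensen

/-- The probability mass function of the random variable `X` when the sample space carries the
mass function `P`. -/
def law {Ω A : Type*} [Fintype Ω] [DecidableEq A] (P : Ω → ℝ) (X : Ω → A) (a : A) : ℝ :=
  ∑ ω with X ω = a, P ω

/-- The conditional collision probability of `X` given `Y`: the expectation over `ω` of
`ℙ(X = X ω | Y = Y ω)`, that is, the probability that `X` takes the same value at two sample points
drawn independently given a common value of `Y`. -/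
noncomputable def condCollisionProb {Ω A B : Type*} [Fintype Ω] [DecidableEq A] [DecidableEq B]
    (P : Ω → ℝ) (X : Ω → A) (Y : Ω → B) : ℝ :=
  ∑ ω, P ω * (law P (fun ω' => (X ω', Y ω')) (X ω, Y ω) / law P Y (Y ω))

section Law

variable {Ω A : Type*} [Fintype Ω] [DecidableEq A] {P : Ω → ℝ}

lemma law_prodMk_self [DecidableEq Ω] (P : Ω → ℝ) (X : Ω → A) (ω : Ω) :
    law P (fun ω' => (ω', X ω')) (ω, X ω) = P ω := by
  have mem_fiber_iff (ω' : Ω) : (ω', X ω') = (ω, X ω) ↔ ω' = ω := by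
    simp +contextual
  simp [law, mem_fiber_iff, Finset.filter_eq']

lemma law_nonneg (hP : ∀ ω, 0 ≤ P ω) (X : Ω → A) (a : A) : 0 ≤ law P X a :=
  Finset.sum_nonneg fun ω _ => hP ω

lemma law_apply_pos (hP : ∀ ω, 0 ≤ P ω) (X : Ω → A) {ω : Ω} (hω : P ω ≠ 0) :
    0 < law P X (X ω) :=
  Finset.sum_pos' (fun ω' _ => hP ω') ⟨ω, by simp, (hP ω).lt_of_ne' hω⟩

lemma sum_law_mul [Fintype A] (P : Ω → ℝ) (X : Ω → A) (f : A → ℝ) :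
    ∑ a, law P X a * f a = ∑ ω, P ω * f (X ω) := by
  simp only [law, Finset.sum_mul, Finset.sum_filter]
  rw [Finset.sum_comm]
  simp

lemma sum_mul_inv_law_le_card [Fintype A] (P : Ω → ℝ) (X : Ω → A) :
    ∑ ω, P ω * (law P X (X ω))⁻¹ ≤ Fintype.card A :=
  calc ∑ ω, P ω * (law P X (X ω))⁻¹ = ∑ a, law P X a * (law P X a)⁻¹ :=
        (sum_law_mul P X fun a => (law P X a)⁻¹).symm
    _ ≤ ∑ _a : A, (1 : ℝ) := Finset.sum_le_sum fun _ _ => mul_inv_le_one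
    _ = Fintype.card A := by simp

end Law

section CondCollisionProb

variable {Ω A B : Type*} [Fintype Ω] [DecidableEq A] [DecidableEq B] {P : Ω → ℝ}

lemma condCollisionProb_pos (hP : ∀ ω, 0 ≤ P ω) (hP₁ : ∑ ω, P ω = 1) (X : Ω → A) (Y : Ω → B) :
    0 < condCollisionProb P X Y :=
  sum_mul_pos_of_sum_eq_one hP hP₁ fun _ hω =>
    div_pos (law_apply_pos hP (fun ω' => (X ω', Y ω')) hω) (law_apply_pos hP Y hω)

lemma condCollisionProb_id [DecidableEq Ω] (P : Ω → ℝ) (Y : Ω → B) :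
    condCollisionProb P id Y = ∑ ω, P ω * (P ω / law P Y (Y ω)) := by
  simp only [condCollisionProb, id, law_prodMk_self]

lemma condCollisionProb_id_le_mul_card [DecidableEq Ω] [Fintype B] {c : ℝ} (hP : ∀ ω, 0 ≤ P ω)
    (hc : 0 ≤ c) (hPc : ∀ ω, P ω ≤ c) (Y : Ω → B) :
    condCollisionProb P id Y ≤ c * Fintype.card B :=
  calc condCollisionProb P id Y = ∑ ω, P ω * (P ω * (law P Y (Y ω))⁻¹) := by
        simp only [condCollisionProb_id, div_eq_mul_inv]
    _ ≤ ∑ ω, c * (P ω * (law P Y (Y ω))⁻¹) := Finset.sum_le_sum fun ω _ =>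
        mul_le_mul_of_nonneg_right (hPc ω)
          (mul_nonneg (hP ω) (inv_nonneg.2 (law_nonneg hP Y (Y ω))))
    _ ≤ c * Fintype.card B := by
        rw [← Finset.mul_sum]
        exact mul_le_mul_of_nonneg_left (sum_mul_inv_law_le_card P Y) hc

end CondCollisionProb

section MutualInformation

variable {Ω A B : Type*} [Fintype Ω] [Fintype A] [DecidableEq A] [DecidableEq B] {P : Ω → ℝ}

lemma mutualInfo_eq_sum_mul_log [Fintype B] (P : Ω → ℝ) (X : Ω → A) (Y : Ω → B) :
    mutualInfo P X Y = ∑ ω, P ω * Real.log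
      (law P (fun ω' => (X ω', Y ω')) (X ω, Y ω) / (law P X (X ω) * law P Y (Y ω))) := by
  rw [← sum_law_mul P (fun ω => (X ω, Y ω)) fun ab => Real.log
    (law P (fun ω' => (X ω', Y ω')) ab / (law P X ab.1 * law P Y ab.2)), Fintype.sum_prod_type]
  simp only [mutualInfo, law, Prod.mk.injEq]

lemma sum_mul_log_inv_law_le_log_card (hP : ∀ ω, 0 ≤ P ω) (hP₁ : ∑ ω, P ω = 1) (X : Ω → A) :
    ∑ ω, P ω * Real.log (law P X (X ω))⁻¹ ≤ Real.log (Fintype.card A) := by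
  have inv_law_pos (ω : Ω) (hω : P ω ≠ 0) : 0 < (law P X (X ω))⁻¹ :=
    inv_pos.2 (law_apply_pos hP X hω)
  exact (sum_mul_log_le_log_sum_mul hP hP₁ inv_law_pos).trans <|
    Real.log_le_log (sum_mul_pos_of_sum_eq_one hP hP₁ inv_law_pos) (sum_mul_inv_law_le_card P X)

theorem mutualInfo_le_log_card_mul_condCollisionProb [Fintype B] (hP : ∀ ω, 0 ≤ P ω)
    (hP₁ : ∑ ω, P ω = 1) (X : Ω → A) (Y : Ω → B) :
    mutualInfo P X Y ≤ Real.log (Fintype.card A * condCollisionProb P X Y) := by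
  set condLaw : Ω → ℝ := fun ω => law P (fun ω' => (X ω', Y ω')) (X ω, Y ω) / law P Y (Y ω)
  have condLaw_pos (ω : Ω) (hω : P ω ≠ 0) : 0 < condLaw ω :=
    div_pos (law_apply_pos hP (fun ω' => (X ω', Y ω')) hω) (law_apply_pos hP Y hω)
  have log_split (ω : Ω) :
      P ω * Real.log (law P (fun ω' => (X ω', Y ω')) (X ω, Y ω) /
        (law P X (X ω) * law P Y (Y ω))) =
      P ω * Real.log (law P X (X ω))⁻¹ + P ω * Real.log (condLaw ω) := by
    rcases eq_or_ne (P ω) 0 with hω | hω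
    · simp [hω]
    · rw [← mul_add, ← Real.log_mul (inv_pos.2 (law_apply_pos hP X hω)).ne' (condLaw_pos ω hω).ne',
        inv_mul_eq_div, div_div, mul_comm (law P Y _)]
  have card_ne_zero : (Fintype.card A : ℝ) ≠ 0 := by
    obtain ⟨ω, -, -⟩ := Finset.exists_ne_zero_of_sum_ne_zero (hP₁.trans_ne one_ne_zero)
    have : Nonempty A := ⟨X ω⟩
    exact Nat.cast_ne_zero.2 Fintype.card_ne_zero
  calc mutualInfo P X Y
      = ∑ ω, P ω * Real.log (law P X (X ω))⁻¹ + ∑ ω, P ω * Real.log (condLaw ω) := by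
        rw [mutualInfo_eq_sum_mul_log, ← Finset.sum_add_distrib]
        exact Finset.sum_congr rfl fun ω _ => log_split ω
    _ ≤ Real.log (Fintype.card A) + Real.log (condCollisionProb P X Y) :=
        add_le_add (sum_mul_log_inv_law_le_log_card hP hP₁ X)
          (sum_mul_log_le_log_sum_mul hP hP₁ condLaw_pos)
    _ = Real.log (Fintype.card A * condCollisionProb P X Y) :=
        (Real.log_mul card_ne_zero (condCollisionProb_pos hP hP₁ X Y).ne').symm

end MutualInformation

section IndependentSeed

variable {R A B I : Type*} [Fintype R] [Fintype I] [DecidableEq A] [DecidableEq B] [DecidableEq I]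

lemma law_prodMk_seed (P : R → ℝ) (Q : I → ℝ) (X : I → R → A) (a : A) (i : I) :
    law (fun ω : R × I => P ω.1 * Q ω.2) (fun ω => (X ω.2 ω.1, ω.2)) (a, i) =
      law P (X i) a * Q i := by
  simp only [law, Finset.sum_filter, Fintype.sum_prod_type, Prod.mk.injEq, Finset.sum_mul]
  refine Finset.sum_congr rfl fun x _ => ?_
  rw [Fintype.sum_eq_single i fun j hj => if_neg fun h => hj h.2]
  simp

lemma condCollisionProb_prodMk_seed (P : R → ℝ) (Q : I → ℝ) (X : I → R → A) (Y : R → B) :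
    condCollisionProb (fun ω : R × I => P ω.1 * Q ω.2) (fun ω => X ω.2 ω.1)
      (fun ω => (Y ω.1, ω.2)) = ∑ i, Q i * condCollisionProb P (X i) Y := by
  have joint_law (a : A) (b : B) (i : I) :
      law (fun ω : R × I => P ω.1 * Q ω.2) (fun ω => (X ω.2 ω.1, Y ω.1, ω.2)) (a, b, i) =
        law P (fun x => (X i x, Y x)) (a, b) * Q i := by
    rw [← law_prodMk_seed P Q fun i x => (X i x, Y x)]
    simp only [law, Prod.mk.injEq, and_assoc]
  simp only [condCollisionProb, Fintype.sum_prod_type_right, joint_law,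
    law_prodMk_seed P Q fun _ => Y, Finset.mul_sum]
  refine Finset.sum_congr rfl fun i _ => Finset.sum_congr rfl fun x _ => ?_
  rcases eq_or_ne (Q i) 0 with hi | hi
  · simp [hi]
  · rw [mul_div_mul_right _ _ hi]
    ring

end IndependentSeed

section PrivacyAmplification

variable {R T B : Type*} [DecidableEq T] {ε : ℝ} {𝓖 : Finset (R → T)}

lemma AlmostUniversal₂.card_filter_div_card_le [DecidableEq R] (hAU : AlmostUniversal₂ ε 𝓖)
    (hε : 0 ≤ ε) (r r' : R) :
    ((𝓖.filter fun g => g r = g r').card : ℝ) / 𝓖.card ≤ (if r = r' then 1 else 0) + ε := by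
  split_ifs with h
  · have : ((𝓖.filter fun g => g r = g r').card : ℝ) / 𝓖.card ≤ 1 :=
      div_le_one_of_le₀ (mod_cast Finset.card_filter_le _ _) (Nat.cast_nonneg _)
    linarith
  · simpa only [zero_add] using hAU r r' h

variable [Fintype R] [DecidableEq B]

lemma average_law_prodMk_eq_sum (P : R → ℝ) (𝓖 : Finset (R → T)) (E : R → B) (x : R) :
    ∑ g : {g // g ∈ 𝓖}, (𝓖.card : ℝ)⁻¹ * law P (fun y => (g.1 y, E y)) (g.1 x, E x) =
      ∑ y with E y = E x, P y * ((𝓖.filter fun g => g y = g x).card / 𝓖.card) := by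
  have joint_law (g : R → T) : law P (fun y => (g y, E y)) (g x, E x) =
      ∑ y with E y = E x, if g y = g x then P y else 0 := by
    rw [← Finset.sum_filter, Finset.filter_filter]
    simp only [law, Prod.mk.injEq, and_comm]
  have collision_count (y : R) : ∑ g : {g // g ∈ 𝓖}, (if g.1 y = g.1 x then P y else 0) =
      (𝓖.filter fun g => g y = g x).card * P y := by
    rw [Finset.sum_coe_sort 𝓖 fun g => if g y = g x then P y else 0, ← Finset.sum_filter,
      Finset.sum_const, nsmul_eq_mul]
  simp only [joint_law]
  rw [← Finset.mul_sum, Finset.sum_comm, Finset.mul_sum]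
  refine Finset.sum_congr rfl fun y _ => ?_
  rw [collision_count]
  ring

variable {P : R → ℝ}

lemma AlmostUniversal₂.average_law_prodMk_le (hAU : AlmostUniversal₂ ε 𝓖) (hε : 0 ≤ ε)
    (hP : ∀ x, 0 ≤ P x) (E : R → B) (x : R) :
    ∑ g : {g // g ∈ 𝓖}, (𝓖.card : ℝ)⁻¹ * law P (fun y => (g.1 y, E y)) (g.1 x, E x) ≤
      P x + ε * law P E (E x) := by
  classical
  calc _ = ∑ y with E y = E x, P y * ((𝓖.filter fun g => g y = g x).card / 𝓖.card) :=
        average_law_prodMk_eq_sum P 𝓖 E x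
    _ ≤ ∑ y with E y = E x, P y * ((if y = x then 1 else 0) + ε) :=
        Finset.sum_le_sum fun y _ =>
          mul_le_mul_of_nonneg_left (hAU.card_filter_div_card_le hε y x) (hP y)
    _ = P x + ε * law P E (E x) := by
        simp [law, mul_add, Finset.sum_add_distrib, ← Finset.sum_mul, mul_comm ε]

theorem AlmostUniversal₂.condCollisionProb_hash_le [DecidableEq R]
    (hAU : AlmostUniversal₂ ε 𝓖) (hε : 0 ≤ ε) (hP : ∀ x, 0 ≤ P x) (hP₁ : ∑ x, P x = 1) (E : R → B) :
    condCollisionProb (fun ω : R × {g // g ∈ 𝓖} => P ω.1 * (𝓖.card : ℝ)⁻¹)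
      (fun ω => ω.2.1 ω.1) (fun ω => (E ω.1, ω.2)) ≤ condCollisionProb P id E + ε := by
  have swap_sums : ∑ g : {g // g ∈ 𝓖}, (𝓖.card : ℝ)⁻¹ * condCollisionProb P g.1 E =
      ∑ x, P x * ((∑ g : {g // g ∈ 𝓖},
        (𝓖.card : ℝ)⁻¹ * law P (fun y => (g.1 y, E y)) (g.1 x, E x)) / law P E (E x)) := by
    simp only [condCollisionProb, Finset.mul_sum, Finset.sum_div]
    rw [Finset.sum_comm]
    exact Finset.sum_congr rfl fun x _ => Finset.sum_congr rfl fun g _ => by ring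
  have conditional_average_le (x : R) :
      (∑ g : {g // g ∈ 𝓖}, (𝓖.card : ℝ)⁻¹ * law P (fun y => (g.1 y, E y)) (g.1 x, E x)) /
        law P E (E x) ≤ P x / law P E (E x) + ε :=
    calc _ ≤ (P x + ε * law P E (E x)) / law P E (E x) :=
          div_le_div_of_nonneg_right (hAU.average_law_prodMk_le hε hP E x) (law_nonneg hP E _)
      _ = P x / law P E (E x) + ε * (law P E (E x) / law P E (E x)) := by
          rw [add_div, mul_div_assoc]
      _ ≤ _ := by gcongr; exact mul_le_of_le_one_right hε (div_self_le_one _)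
  calc _ = ∑ g : {g // g ∈ 𝓖}, (𝓖.card : ℝ)⁻¹ * condCollisionProb P g.1 E :=
        condCollisionProb_prodMk_seed P _ (fun g : {g // g ∈ 𝓖} => g.1) E
    _ ≤ ∑ x, P x * (P x / law P E (E x) + ε) := by
        rw [swap_sums]
        gcongr with x
        exacts [hP x, conditional_average_le x]
    _ = condCollisionProb P id E + ε := by
        simp only [condCollisionProb_id, mul_add, Finset.sum_add_distrib, ← Finset.sum_mul, hP₁,
          one_mul]

theorem AlmostUniversal₂.mutualInfo_hash_le_log [DecidableEq R] [Fintype T] [Fintype B]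
    (hAU : AlmostUniversal₂ ε 𝓖) (hε : 0 ≤ ε) (h𝓖 : 𝓖.Nonempty)
    (hP : ∀ x, 0 ≤ P x) (hP₁ : ∑ x, P x = 1) (E : R → B) :
    mutualInfo (fun ω : R × {g // g ∈ 𝓖} => P ω.1 * (𝓖.card : ℝ)⁻¹)
      (fun ω => ω.2.1 ω.1) (fun ω => (E ω.1, ω.2)) ≤
      Real.log (Fintype.card T * (condCollisionProb P id E + ε)) := by
  set Q : R × {g // g ∈ 𝓖} → ℝ := fun ω => P ω.1 * (𝓖.card : ℝ)⁻¹
  have Q_nonneg (ω : R × {g // g ∈ 𝓖}) : 0 ≤ Q ω := mul_nonneg (hP ω.1) (by positivity)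
  have card_ne_zero : (𝓖.card : ℝ) ≠ 0 := Nat.cast_ne_zero.2 h𝓖.card_ne_zero
  have sum_Q : ∑ ω, Q ω = 1 := by
    rw [Fintype.sum_prod_type, ← Fintype.sum_mul_sum P fun _ : {g // g ∈ 𝓖} => (𝓖.card : ℝ)⁻¹, hP₁]
    simp [card_ne_zero]
  have : Nonempty T := by
    obtain ⟨x, -, -⟩ := Finset.exists_ne_zero_of_sum_ne_zero (hP₁.trans_ne one_ne_zero)
    exact ⟨h𝓖.choose x⟩
  refine (mutualInfo_le_log_card_mul_condCollisionProb Q_nonneg sum_Q _ _).trans ?_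
  have collision_pos := condCollisionProb_pos Q_nonneg sum_Q (fun ω => ω.2.1 ω.1)
    fun ω => (E ω.1, ω.2)
  gcongr
  exact hAU.condCollisionProb_hash_le hε hP hP₁ E

end PrivacyAmplification

theorem stmt_6_general {R T B : Type*} [Fintype R] [Nonempty R] [Fintype T] [Fintype B]
    [DecidableEq T] [DecidableEq B] (E : R → B) (𝓖 : Finset (R → T)) (h𝓖 : 𝓖.Nonempty)
    (hAU : AlmostUniversal₂ (Fintype.card T : ℝ)⁻¹ 𝓖) :
    mutualInfo (fun _ : R × {g // g ∈ 𝓖} => (Fintype.card (R × {g // g ∈ 𝓖}) : ℝ)⁻¹)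
      (fun ω => ω.2.1 ω.1) (fun ω => (E ω.1, ω.2)) ≤
      Fintype.card T * Fintype.card B / Fintype.card R := by
  classical
  have : Nonempty T := ⟨h𝓖.choose (Classical.arbitrary R)⟩
  have card_T_ne_zero : (Fintype.card T : ℝ) ≠ 0 := Nat.cast_ne_zero.2 Fintype.card_ne_zero
  set P : R → ℝ := fun _ => (Fintype.card R : ℝ)⁻¹
  have P_nonneg (x : R) : 0 ≤ P x := inv_nonneg.2 (Nat.cast_nonneg _)
  have sum_P : ∑ x, P x = 1 := by simp [P]
  have collision_nonneg : 0 ≤ condCollisionProb P id E :=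
    (condCollisionProb_pos P_nonneg sum_P id E).le
  have collision_le : condCollisionProb P id E ≤ (Fintype.card R : ℝ)⁻¹ * Fintype.card B :=
    condCollisionProb_id_le_mul_card P_nonneg (inv_nonneg.2 (Nat.cast_nonneg _)) (fun _ => le_rfl) E
  calc _ = mutualInfo (fun ω : R × {g // g ∈ 𝓖} => P ω.1 * (𝓖.card : ℝ)⁻¹)
        (fun ω => ω.2.1 ω.1) (fun ω => (E ω.1, ω.2)) := by
        simp [P, mul_comm]
    _ ≤ Real.log (Fintype.card T * (condCollisionProb P id E + (Fintype.card T : ℝ)⁻¹)) :=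
        hAU.mutualInfo_hash_le_log (by positivity) h𝓖 P_nonneg sum_P E
    _ = Real.log (1 + Fintype.card T * condCollisionProb P id E) := by
        rw [mul_add, mul_inv_cancel₀ card_T_ne_zero, add_comm]
    _ ≤ Fintype.card T * condCollisionProb P id E := by
        have one_add_pos : 0 < 1 + Fintype.card T * condCollisionProb P id E := by positivity
        linarith [Real.log_le_sub_one_of_pos one_add_pos]
    _ ≤ Fintype.card T * ((Fintype.card R : ℝ)⁻¹ * Fintype.card B) := by gcongr
    _ = Fintype.card T * Fintype.card B / Fintype.card R := by ring

/-- Paper's equation (12): with a `2^{−m}`-almost-universal₂ family (e.g. Toeplitz hashing)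
and `s = n − t − m`, the attacker's information about the authentication key is at most
`2^{−s}` nats. -/
theorem stmt_6 (n m t : ℕ) (hmt : m + t ≤ n) (S : Finset (Fin n)) (hS : S.card = t)
    (𝓖 : Finset ((Fin n → ZMod 2) → (Fin m → ZMod 2))) (h𝓖 : 𝓖.Nonempty)
    (hAU : AlmostUniversal₂ (((2 : ℝ) ^ m)⁻¹) 𝓖) :
    mutualInfo
      (fun _ : (Fin n → ZMod 2) × {g // g ∈ 𝓖} =>
        (Fintype.card ((Fin n → ZMod 2) × {g // g ∈ 𝓖}) : ℝ)⁻¹)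
      (fun ω => (ω.2 : (Fin n → ZMod 2) → (Fin m → ZMod 2)) ω.1)
      (fun ω => ((fun i : {i // i ∈ S} => ω.1 i), ω.2))
      ≤ (2 : ℝ) ^ (-((n - t - m : ℕ) : ℤ)) := by
  rw [zpow_neg_sub_sub_eq_div two_ne_zero hmt]
  simpa [hS] using stmt_6_general (fun x (i : {i // i ∈ S}) => x i) 𝓖 h𝓖 (by simpa using hAU)
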